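/- arXiv:1503.05931 — 2 statements merged into one kernel-verified Lean document; each statement's English description precedes it below -/
import Mathlib

section
/- Every compact metric space X that is connected and locally connected is arcwise connected: any two distinct points of X are joined by an arc in X. -/
open Function Set Topology

/-- `x` and `y` are joined by an arc (a continuous injective path) lying in `S`. -/
def JoinedByArcIn {X : Type*} [TopologicalSpace X] (S : Set X) (x y : X) : Prop :=
  ∃ γ : unitInterval → X, Continuous γ ∧ Function.Injective γ ∧
    γ 0 = x ∧ γ 1 = y ∧ Set.range γ ⊆ S

/-!
Chains of small connected sets give a coarse path from `x` to `y`. Subdividing each link inside the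
small connected set that contains it gives a finer coarse path that stays close, and by completeness
the iteration converges to a path.

To turn a path `γ` into an arc, erase its loops. The closed parameter sets on whose gaps `γ` returns
to its starting value are stable under intersections of chains, so there is a minimal one, and
collapsing its gaps yields a path `β` all of whose fibres are intervals. A weighted sum of the
distances from a dense sequence of points of `β` to `β '' Iic t` is then nonincreasing in `t` and
has exactly the fibres of `β`; taking it as the new parameter makes `β` injective.
-/

open Filter Relation TopologicalSpace unitInterval

section Chains

variable {X : Type*} {r : X → X → Prop}

lemma exists_seq_of_reflTransGen (hrefl : ∀ x, r x x) {x y : X} (h : ReflTransGen r x y) :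
    ∃ c : ℕ → X, c 0 = x ∧ (∀ᶠ j in atTop, c j = y) ∧ ∀ j, r (c j) (c (j + 1)) := by
  induction h using ReflTransGen.head_induction_on with
  | refl => exact ⟨fun _ => y, rfl, .of_forall fun _ => rfl, fun _ => hrefl y⟩
  | @head x z hxz _ ih =>
    obtain ⟨c, rfl, hcy, hc⟩ := ih
    refine ⟨fun j => j.casesOn x c, rfl, ?_, ?_⟩
    · rw [← map_add_atTop_eq_nat 1, eventually_map]
      exact hcy
    · rintro (_ | j)
      · exact hxz
      · exact hc j

lemma reflTransGen_of_preconnectedSpace [TopologicalSpace X] [PreconnectedSpace X]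
    (hsymm : ∀ x y, r x y → r y x) (hr : ∀ x, ∀ᶠ y in 𝓝 x, r x y) (x y : X) :
    ReflTransGen r x y :=
  PreconnectedSpace.induction₂' (ReflTransGen r)
    (fun x => (hr x).mono fun y hxy => ⟨.single hxy, .single (hsymm x y hxy)⟩) inferInstance x y

lemma rel_concat_succ {N : ℕ} (hN : 0 < N) {c : ℕ → ℕ → X} (hjoin : ∀ i, c i N = c (i + 1) 0)
    (hc : ∀ i j, r (c i j) (c i (j + 1))) (m : ℕ) :
    r (c (m / N) (m % N)) (c ((m + 1) / N) ((m + 1) % N)) := by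
  obtain ⟨i, j, hj, rfl⟩ : ∃ i j, j < N ∧ m = N * i + j :=
    ⟨m / N, m % N, Nat.mod_lt m hN, (Nat.div_add_mod m N).symm⟩
  rw [Nat.mul_add_div hN, Nat.div_eq_of_lt hj, Nat.mul_add_mod, Nat.mod_eq_of_lt hj, add_zero]
  rcases (Nat.succ_le_of_lt hj).lt_or_eq with hj' | rfl
  · rw [add_assoc, Nat.mul_add_div hN, Nat.div_eq_of_lt hj', Nat.mul_add_mod,
      Nat.mod_eq_of_lt hj', add_zero]
    exact hc i j
  · rw [add_assoc, ← Nat.mul_succ, Nat.mul_div_cancel_left _ hN, Nat.mul_mod_right, ← hjoin]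
    exact hc i j

/-- The step function on `[0, 1]` that runs through `c 0, …, c N` at times `0, 1 / N, …, 1`. -/
noncomputable def stepCurve (N : ℕ) (c : ℕ → X) (t : I) : X :=
  c ⌊(t : ℝ) * N⌋₊

@[simp]
lemma stepCurve_zero (N : ℕ) (c : ℕ → X) : stepCurve N c 0 = c 0 := by
  simp [stepCurve]

@[simp]
lemma stepCurve_one (N : ℕ) (c : ℕ → X) : stepCurve N c 1 = c N := by
  simp [stepCurve]

lemma rel_stepCurve (hrefl : ∀ x, r x x) (hsymm : ∀ x y, r x y → r y x) {N : ℕ} (hN : 0 < N)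
    {c : ℕ → X} (hc : ∀ j, r (c j) (c (j + 1))) {s t : I} (hst : dist s t < 1 / N) :
    r (stepCurve N c s) (stepCurve N c t) := by
  wlog hle : s ≤ t generalizing s t
  · exact hsymm _ _ (this (dist_comm s t ▸ hst) (le_of_not_ge hle))
  have hN' : (0 : ℝ) < N := Nat.cast_pos.2 hN
  have hgap : (t : ℝ) * N < s * N + 1 := by
    rw [dist_comm, Subtype.dist_eq, Real.dist_eq, lt_div_iff₀ hN'] at hst
    nlinarith [le_abs_self ((t : ℝ) - s)]
  have hlower : ⌊(s : ℝ) * N⌋₊ ≤ ⌊(t : ℝ) * N⌋₊ := by gcongr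
  have hupper : ⌊(t : ℝ) * N⌋₊ ≤ ⌊(s : ℝ) * N⌋₊ + 1 := by
    rw [← Nat.floor_add_one (mul_nonneg s.2.1 hN'.le)]
    exact Nat.floor_le_floor hgap.le
  rcases hupper.lt_or_eq with h | h
  · rw [stepCurve, stepCurve, hlower.antisymm (Nat.le_of_lt_succ h)]
    exact hrefl _
  · rw [stepCurve, stepCurve, h]
    exact hc _

end Chains

lemma exists_unitInterval_grid {δ : ℝ} (hδ : 0 < δ) :
    ∃ L > 0, ∃ node : ℕ → I, node 0 = 0 ∧ (∀ i ≥ L, node i = 1) ∧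
      (∀ i, dist (node i) (node (i + 1)) < δ) ∧ ∀ t : I, dist t (node ⌊(t : ℝ) * L⌋₊) < δ := by
  obtain ⟨n, hn⟩ := exists_nat_one_div_lt hδ
  have hproj : ∀ u v : ℝ, dist (projIcc 0 1 zero_le_one u) (projIcc 0 1 zero_le_one v) ≤ dist u v :=
    fun u v => by simpa using (LipschitzWith.projIcc (zero_le_one' ℝ)).dist_le_mul u v
  refine ⟨n + 1, n.succ_pos, fun i => projIcc 0 1 zero_le_one ((i : ℝ) / (n + 1)), by simp,
    fun i hi => projIcc_of_right_le _ ?_, fun i => (hproj _ _).trans_lt ?_, fun t => ?_⟩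
  · rw [one_le_div₀ (by positivity)]
    exact_mod_cast hi
  · rw [dist_comm, Real.dist_eq, ← sub_div, Nat.cast_succ, add_sub_cancel_left,
      abs_of_pos (by positivity)]
    exact hn
  · conv_lhs => enter [1]; rw [← projIcc_val zero_le_one t]
    refine (hproj _ _).trans_lt (lt_of_le_of_lt ?_ hn)
    have hfloor_le := Nat.floor_le (mul_nonneg t.2.1 (Nat.cast_nonneg (α := ℝ) (n + 1)))
    have hlt_floor := Nat.lt_floor_add_one ((t : ℝ) * (n + 1 : ℕ))
    push_cast at hfloor_le hlt_floor ⊢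
    rw [Real.dist_eq, abs_of_nonneg (sub_nonneg.2 ((div_le_iff₀ (by positivity)).2 hfloor_le)),
      sub_le_iff_le_add, ← add_div, le_div_iff₀ (by positivity)]
    linarith

section CoarseCurves

variable {X : Type*} [PseudoMetricSpace X] {ε ε' : ℝ} {x y : X}

/-- `x` and `y` lie in a common preconnected set of diameter at most `ε`; the diameter bound is
spelled out pointwise (and strictly) to avoid the junk value of `Metric.diam` on unbounded sets. -/
def ConnectedWithin (ε : ℝ) (x y : X) : Prop :=
  ∃ C : Set X, IsPreconnected C ∧ x ∈ C ∧ y ∈ C ∧ ∀ u ∈ C, ∀ v ∈ C, dist u v < ε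

/-- `f` sends nearby parameters to points that are connected within `ε`. -/
def CoarselyContinuous (ε : ℝ) (f : I → X) : Prop :=
  ∃ δ > 0, ∀ s t, dist s t < δ → ConnectedWithin ε (f s) (f t)

namespace ConnectedWithin

lemma refl (hε : 0 < ε) (x : X) : ConnectedWithin ε x x :=
  ⟨{x}, isPreconnected_singleton, rfl, rfl, by simpa using hε⟩

lemma symm : ConnectedWithin ε x y → ConnectedWithin ε y x
  | ⟨C, hC, hx, hy, hdist⟩ => ⟨C, hC, hy, hx, hdist⟩

lemma dist_lt : ConnectedWithin ε x y → dist x y < ε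
  | ⟨_, _, hx, hy, hdist⟩ => hdist x hx y hy

lemma eventually_nhds [LocallyConnectedSpace X] (hε : 0 < ε) (x : X) :
    ∀ᶠ y in 𝓝 x, ConnectedWithin ε x y := by
  obtain ⟨V, hVball, hVopen, hxV, hVconn⟩ :=
    locallyConnectedSpace_iff_subsets_isOpen_isConnected.1 ‹_› x _
      (Metric.ball_mem_nhds x (half_pos hε))
  filter_upwards [hVopen.mem_nhds hxV] with y hy
  refine ⟨V, hVconn.isPreconnected, hxV, hy, fun u hu v hv => ?_⟩
  linarith [dist_triangle_right u v x, Metric.mem_ball.1 (hVball hu), Metric.mem_ball.1 (hVball hv)]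

end ConnectedWithin

variable [LocallyConnectedSpace X]

lemma exists_seq_connectedWithin_of_isPreconnected {C : Set X} (hC : IsPreconnected C)
    (hε : 0 < ε) (hx : x ∈ C) (hy : y ∈ C) :
    ∃ c : ℕ → X, c 0 = x ∧ (∀ᶠ j in atTop, c j = y) ∧
      (∀ j, ConnectedWithin ε (c j) (c (j + 1))) ∧ ∀ j, c j ∈ C := by
  have : PreconnectedSpace C := Subtype.preconnectedSpace hC
  have hchain : ReflTransGen (fun u v : C => ConnectedWithin ε (u : X) v) ⟨x, hx⟩ ⟨y, hy⟩ :=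
    reflTransGen_of_preconnectedSpace (fun _ _ => .symm)
      (fun u => continuous_subtype_val.tendsto u (ConnectedWithin.eventually_nhds hε u.1)) _ _
  obtain ⟨c, hc0, hcy, hc⟩ := exists_seq_of_reflTransGen (fun u : C => .refl hε u.1) hchain
  exact ⟨fun j => c j, congrArg _ hc0, hcy.mono fun _ => congrArg _, hc, fun j => (c j).2⟩

lemma exists_coarselyContinuous [PreconnectedSpace X] (hε : 0 < ε) (x y : X) :
    ∃ f : I → X, CoarselyContinuous ε f ∧ f 0 = x ∧ f 1 = y := by
  obtain ⟨c, hc0, hcy, hc, -⟩ :=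
    exists_seq_connectedWithin_of_isPreconnected isPreconnected_univ hε (mem_univ x) (mem_univ y)
  obtain ⟨N, hcN, hN⟩ := (hcy.and (eventually_gt_atTop 0)).exists
  exact ⟨stepCurve N c, ⟨1 / N, by positivity,
    fun _ _ => rel_stepCurve (.refl hε) (fun _ _ => .symm) hN hc⟩, by simp [hc0], by simp [hcN]⟩

/-- All links get the same number `N` of pieces, so that the subdivided chain can be parametrised
by a uniform grid refining the one of `h`. -/
lemma exists_uniform_subdivision (hε' : 0 < ε') {h : ℕ → X} {L : ℕ} (hconst : ∀ i ≥ L, h i = h L)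
    (hh : ∀ i, ConnectedWithin ε (h i) (h (i + 1))) :
    ∃ N > 0, ∃ c : ℕ → ℕ → X, (∀ i, c i 0 = h i) ∧ (∀ i, c i N = h (i + 1)) ∧
      (∀ i j, ConnectedWithin ε' (c i j) (c i (j + 1))) ∧ ∀ i j, dist (h i) (c i j) < ε := by
  choose C hC hmem hmem' hdist using hh
  choose c hc0 hcend hc hcC using
    fun i => exists_seq_connectedWithin_of_isPreconnected (hC i) hε' (hmem i) (hmem' i)
  obtain ⟨N, hcN, hN⟩ := (((finite_Iic L).eventually_all.2 fun i _ => hcend i).and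
    (eventually_gt_atTop 0)).exists
  have hmin : ∀ i, h (min i L) = h i := fun i => by grind
  have hmin_succ : ∀ i, h (min i L + 1) = h (i + 1) := fun i => by grind
  refine ⟨N, hN, fun i => c (min i L), fun i => (hc0 _).trans (hmin i),
    fun i => (hcN _ (min_le_right i L)).trans (hmin_succ i), fun i => hc _, fun i j => ?_⟩
  rw [← hmin i]
  exact hdist _ _ (hmem _) _ (hcC _ j)

lemma CoarselyContinuous.exists_refinement {f : I → X} (hf : CoarselyContinuous ε f)
    (hε' : 0 < ε') :
    ∃ g : I → X, CoarselyContinuous ε' g ∧ g 0 = f 0 ∧ g 1 = f 1 ∧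
      ∀ t, dist (f t) (g t) < 2 * ε := by
  obtain ⟨δ, hδ, hf⟩ := hf
  obtain ⟨L, hL, node, hnode_zero, hnode_one, hstep, hnear⟩ := exists_unitInterval_grid hδ
  obtain ⟨N, hN, c, hc0, hcN, hc, hcf⟩ := exists_uniform_subdivision (h := fun i => f (node i))
    (L := L) hε' (fun i hi => by rw [hnode_one i hi, hnode_one L le_rfl])
    (fun i => hf _ _ (hstep i))
  refine ⟨stepCurve (L * N) fun m => c (m / N) (m % N), ⟨1 / (L * N : ℕ), by positivity,
    fun _ _ => rel_stepCurve (.refl hε') (fun _ _ => .symm) (by positivity)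
      (rel_concat_succ hN (fun i => by rw [hcN, hc0]) hc)⟩, ?_, ?_, fun t => ?_⟩
  · simp [hc0, hnode_zero]
  · simp [hc0, hN, hnode_one]
  · have hfloor : ⌊(t : ℝ) * (L * N : ℕ)⌋₊ / N = ⌊(t : ℝ) * L⌋₊ := by
      rw [← Nat.floor_div_natCast]
      congr 1
      push_cast
      field_simp
    rw [stepCurve, hfloor]
    calc dist (f t) _ ≤ dist (f t) (f (node ⌊(t : ℝ) * L⌋₊)) + dist (f (node ⌊(t : ℝ) * L⌋₊)) _ :=
          dist_triangle _ _ _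
      _ < ε + ε := add_lt_add (hf _ _ (hnear t)).dist_lt (hcf _ _)
      _ = 2 * ε := (two_mul ε).symm

end CoarseCurves

lemma exists_continuous_tendsto {T X : Type*} [TopologicalSpace T] [PseudoMetricSpace X]
    [CompleteSpace X] {f : ℕ → T → X} {C r : ℝ} (hr₀ : 0 ≤ r) (hr : r < 1)
    (hclose : ∀ k t, dist (f k t) (f (k + 1) t) ≤ C * r ^ k)
    (hosc : ∀ ε > 0, ∀ᶠ k in atTop, ∀ t, ∀ᶠ s in 𝓝 t, dist (f k s) (f k t) < ε) :
    ∃ F : T → X, Continuous F ∧ ∀ t, Tendsto (fun k => f k t) atTop (𝓝 (F t)) := by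
  choose F hF using fun t => cauchySeq_tendsto_of_complete
    (cauchySeq_of_le_geometric r C hr fun k => hclose k t)
  have hbound : ∀ k t, dist (f k t) (F t) ≤ C * r ^ k / (1 - r) := fun k t =>
    dist_le_of_le_geometric_of_tendsto r C hr (fun k => hclose k t) (hF t) k
  refine ⟨F, continuous_iff_continuousAt.2 fun t => Metric.tendsto_nhds.2 fun ε hε => ?_, hF⟩
  have hsmall : Tendsto (fun k => C * r ^ k / (1 - r)) atTop (𝓝 0) := by
    simpa using ((tendsto_pow_atTop_nhds_zero_of_lt_one hr₀ hr).const_mul C).div_const (1 - r)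
  obtain ⟨k, hkosc, hk⟩ := ((hosc (ε / 3) (by positivity)).and
    (hsmall.eventually_lt_const (show 0 < ε / 3 by positivity))).exists
  filter_upwards [hkosc t] with s hs
  linarith [dist_triangle4 (F s) (f k s) (f k t) (F t), dist_comm (F s) (f k s), hbound k s,
    hbound k t]

lemma joined_of_completeSpace {X : Type*} [MetricSpace X] [CompleteSpace X] [PreconnectedSpace X]
    [LocallyConnectedSpace X] (x y : X) : Joined x y := by
  let Approx (k : ℕ) := {f : I → X // CoarselyContinuous ((1 / 2 : ℝ) ^ k) f ∧ f 0 = x ∧ f 1 = y}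
  have hrefine : ∀ k (f : Approx k), ∃ g : Approx (k + 1),
      ∀ t, dist (f.1 t) (g.1 t) < 2 * (1 / 2 : ℝ) ^ k := by
    rintro k ⟨f, hf, hf0, hf1⟩
    obtain ⟨g, hg, hg0, hg1, hfg⟩ := hf.exists_refinement (ε' := (1 / 2) ^ (k + 1)) (by positivity)
    exact ⟨⟨g, hg, hg0.trans hf0, hg1.trans hf1⟩, hfg⟩
  choose next hnext using hrefine
  obtain ⟨f₀, hf₀⟩ := exists_coarselyContinuous (ε := (1 / 2) ^ 0) (by positivity) x y
  let f : ∀ k, Approx k := fun k => Nat.rec ⟨f₀, hf₀⟩ next k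
  have hosc : ∀ ε > 0, ∀ᶠ k in atTop, ∀ t, ∀ᶠ s in 𝓝 t, dist ((f k).1 s) ((f k).1 t) < ε := by
    intro ε hε
    filter_upwards [(tendsto_pow_atTop_nhds_zero_of_lt_one one_half_pos.le
      one_half_lt_one).eventually_lt_const hε] with k hk t
    obtain ⟨δ, hδ, hf⟩ := (f k).2.1
    filter_upwards [Metric.ball_mem_nhds t hδ] with s hs
    exact (hf s t hs).dist_lt.trans hk
  obtain ⟨F, hF, hlim⟩ := exists_continuous_tendsto (f := fun k => (f k).1) (C := 2)
    one_half_pos.le one_half_lt_one (fun k t => (hnext k (f k) t).le) hosc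
  refine ⟨⟨⟨F, hF⟩, tendsto_nhds_unique (hlim 0) ?_, tendsto_nhds_unique (hlim 1) ?_⟩⟩
  · simp [(f _).2.2.1]
  · simp [(f _).2.2.2]

section LastBefore

variable {α : Type*} [CompleteLinearOrder α] {K : Set α}

/-- For closed `K ∋ ⊥`, the last point of `K` that is not after `t`. -/
def lastBefore (K : Set α) (t : α) : α := sSup (K ∩ Iic t)

/-- For closed `K ∋ ⊤`, the first point of `K` that is not before `t`. -/
def firstAfter (K : Set α) (t : α) : α := sInf (K ∩ Ici t)

lemma lastBefore_le (K : Set α) (t : α) : lastBefore K t ≤ t :=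
  sSup_le fun _ h => h.2

lemma le_firstAfter (K : Set α) (t : α) : t ≤ firstAfter K t :=
  le_sInf fun _ h => h.2

lemma monotone_lastBefore (K : Set α) : Monotone (lastBefore K) := fun _ _ h =>
  sSup_le_sSup (inter_subset_inter_right K (Iic_subset_Iic.2 h))

lemma le_lastBefore {s t : α} (hs : s ∈ K) (hst : s ≤ t) : s ≤ lastBefore K t :=
  le_sSup ⟨hs, hst⟩

lemma firstAfter_le {s t : α} (hs : s ∈ K) (hts : t ≤ s) : firstAfter K t ≤ s :=
  sInf_le ⟨hs, hts⟩

lemma lastBefore_of_mem {t : α} (ht : t ∈ K) : lastBefore K t = t :=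
  (lastBefore_le K t).antisymm (le_lastBefore ht le_rfl)

lemma disjoint_Ioo_lastBefore_firstAfter (K : Set α) (t : α) :
    Disjoint (Ioo (lastBefore K t) (firstAfter K t)) K := by
  refine disjoint_left.2 fun s hs hsK => ?_
  rcases le_total s t with h | h
  · exact hs.1.not_ge (le_lastBefore hsK h)
  · exact hs.2.not_ge (firstAfter_le hsK h)

lemma lastBefore_eq_of_gap {a b t : α} (ha : a ∈ K) (hgap : Disjoint (Ioo a b) K)
    (ht : t ∈ Ioo a b) : lastBefore K t = a :=
  (sSup_le fun _ hs => le_of_not_gt fun has =>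
    disjoint_left.1 hgap ⟨has, hs.2.trans_lt ht.2⟩ hs.1).antisymm (le_lastBefore ha ht.1.le)

lemma firstAfter_eq_of_gap {a b t : α} (hb : b ∈ K) (hgap : Disjoint (Ioo a b) K)
    (ht : t ∈ Ioo a b) : firstAfter K t = b :=
  (firstAfter_le hb ht.2.le).antisymm (le_sInf fun _ hs => le_of_not_gt fun hsb =>
    disjoint_left.1 hgap ⟨ht.1.trans_le hs.2, hsb⟩ hs.1)

variable [TopologicalSpace α] [OrderTopology α]

lemma lastBefore_mem (hK : IsClosed K) (hbot : ⊥ ∈ K) (t : α) : lastBefore K t ∈ K :=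
  ((hK.inter isClosed_Iic).isCompact.sSup_mem ⟨⊥, hbot, bot_le⟩).1

lemma firstAfter_mem (hK : IsClosed K) (htop : ⊤ ∈ K) (t : α) : firstAfter K t ∈ K :=
  ((hK.inter isClosed_Ici).isCompact.sInf_mem ⟨⊤, htop, le_top⟩).1

lemma continuousWithinAt_lastBefore (hK : IsClosed K) (htop : ⊤ ∈ K) (t : α) :
    ContinuousWithinAt (lastBefore K) (Ici t) t := by
  by_cases ht : t ∈ K
  · rw [ContinuousWithinAt, lastBefore_of_mem ht]
    refine tendsto_of_tendsto_of_tendsto_of_le_of_le' tendsto_const_nhds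
      (tendsto_id.mono_left nhdsWithin_le_nhds) ?_ (.of_forall (lastBefore_le K))
    filter_upwards [self_mem_nhdsWithin] with s hs using le_lastBefore ht hs
  · have hlt : t < firstAfter K t :=
      (le_firstAfter K t).lt_of_ne fun h => ht (h ▸ firstAfter_mem hK htop t)
    refine continuousWithinAt_const.congr_of_eventuallyEq (f := fun _ => lastBefore K t) ?_ rfl
    filter_upwards [self_mem_nhdsWithin, nhdsWithin_le_nhds (Iio_mem_nhds hlt)] with s hts hs
    refine le_antisymm (sSup_le fun u hu => le_lastBefore hu.1 ?_) (monotone_lastBefore K hts)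
    exact le_of_not_ge fun htu => (firstAfter_le hu.1 htu).not_gt (hu.2.trans_lt hs)

lemma continuousWithinAt_firstAfter (hK : IsClosed K) (hbot : ⊥ ∈ K) (t : α) :
    ContinuousWithinAt (firstAfter K) (Iic t) t :=
  continuousWithinAt_lastBefore (α := αᵒᵈ) hK hbot t

lemma tendsto_lastBefore_sInter {c : Set (Set α)} (hc : ∀ K ∈ c, IsClosed K)
    (hbot : ∀ K ∈ c, ⊥ ∈ K) (hchain : IsChain (· ⊆ ·) c) (hne : c.Nonempty) (t : α) :
    Tendsto (fun K : c => lastBefore K.1 t) atBot (𝓝 (lastBefore (⋂₀ c) t)) := by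
  have : Nonempty c := hne.to_subtype
  have : IsCodirectedOrder c :=
    (show IsChain (· ≥ ·) c from hchain.symm).directedOn.isCodirectedOrder
  have hmono : Monotone fun K : c => lastBefore K.1 t := fun K L h =>
    sSup_le_sSup (inter_subset_inter_left _ h)
  have hlim := tendsto_atBot_iInf hmono
  have hmem : ⨅ K : c, lastBefore K.1 t ∈ ⋂₀ c := fun K hK =>
    (hc K hK).mem_of_tendsto hlim <| (eventually_le_atBot ⟨K, hK⟩).mono fun L hL =>
      hL (lastBefore_mem (hc L L.2) (hbot L L.2) t)
  convert hlim
  refine le_antisymm (le_iInf fun K => sSup_le_sSup (inter_subset_inter_left _ ?_))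
    (le_lastBefore hmem ((iInf_le _ hne.to_subtype.some).trans (lastBefore_le _ t)))
  exact sInter_subset_of_mem K.2

lemma tendsto_firstAfter_sInter {c : Set (Set α)} (hc : ∀ K ∈ c, IsClosed K)
    (htop : ∀ K ∈ c, ⊤ ∈ K) (hchain : IsChain (· ⊆ ·) c) (hne : c.Nonempty) (t : α) :
    Tendsto (fun K : c => firstAfter K.1 t) atBot (𝓝 (firstAfter (⋂₀ c) t)) :=
  tendsto_lastBefore_sInter (α := αᵒᵈ) hc htop hchain hne t

end LastBefore

section LoopErasure

variable {α X : Type*} [CompleteLinearOrder α] [TopologicalSpace α]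

/-- `K` is what remains of the parameters of `γ` when some disjoint open intervals are removed, on
each of which `γ` runs through a loop. The removed intervals are encoded as the gaps of `K`. -/
structure IsLoopErasure (γ : α → X) (K : Set α) : Prop where
  isClosed : IsClosed K
  bot_mem : ⊥ ∈ K
  top_mem : ⊤ ∈ K
  eq_of_gap : ∀ a ∈ K, ∀ b ∈ K, a ≤ b → Disjoint (Ioo a b) K → γ a = γ b

namespace IsLoopErasure

variable {γ : α → X} {K : Set α}

lemma univ [DenselyOrdered α] (γ : α → X) : IsLoopErasure γ univ where
  isClosed := isClosed_univ
  bot_mem := mem_univ _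
  top_mem := mem_univ _
  eq_of_gap a _ b _ hab hgap := by
    rw [disjoint_univ, Ioo_eq_empty_iff] at hgap
    rw [hab.antisymm (not_lt.1 hgap)]

variable [OrderTopology α]

lemma diff_Ioo (hK : IsLoopErasure γ K) {s t : α} (hs : s ∈ K) (ht : t ∈ K) (hst : γ s = γ t) :
    IsLoopErasure γ (K \ Ioo s t) where
  isClosed := hK.isClosed.sdiff isOpen_Ioo
  bot_mem := ⟨hK.bot_mem, fun h => not_lt_bot h.1⟩
  top_mem := ⟨hK.top_mem, fun h => not_top_lt h.2⟩
  eq_of_gap := by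
    rintro a ⟨ha, ha'⟩ b ⟨hb, hb'⟩ hab hgap
    by_cases hempty : Disjoint (Ioo a b) K
    · exact hK.eq_of_gap a ha b hb hab hempty
    obtain ⟨m, hm, hmK⟩ := not_disjoint_iff.1 hempty
    have hmst : m ∈ Ioo s t := by_contra fun h => disjoint_left.1 hgap hm ⟨hmK, h⟩
    have hsab : s ∉ Ioo a b := fun h => disjoint_left.1 hgap h ⟨hs, left_notMem_Ioo⟩
    have htab : t ∉ Ioo a b := fun h => disjoint_left.1 hgap h ⟨ht, right_notMem_Ioo⟩
    obtain ⟨rfl, rfl⟩ : s = a ∧ t = b := by grind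
    exact hst

lemma apply_lastBefore (hK : IsLoopErasure γ K) (t : α) :
    γ (lastBefore K t) = γ (firstAfter K t) :=
  hK.eq_of_gap _ (lastBefore_mem hK.isClosed hK.bot_mem t) _
    (firstAfter_mem hK.isClosed hK.top_mem t)
    ((lastBefore_le K t).trans (le_firstAfter K t)) (disjoint_Ioo_lastBefore_firstAfter K t)

lemma ordConnected_preimage_comp_lastBefore (hK : Minimal (IsLoopErasure γ) K) (x : X) :
    ((γ ∘ lastBefore K) ⁻¹' {x}).OrdConnected := by
  refine ⟨fun s hs t ht u hu => ?_⟩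
  have hmem := lastBefore_mem hK.prop.isClosed hK.prop.bot_mem
  have hsub : K ⊆ K \ Ioo (lastBefore K s) (lastBefore K t) :=
    hK.le_of_le (hK.prop.diff_Ioo (hmem s) (hmem t) (hs.trans ht.symm)) sdiff_subset
  rcases (monotone_lastBefore K hu.1).eq_or_lt with h | h
  · exact (congrArg γ h).symm.trans hs
  rcases (monotone_lastBefore K hu.2).eq_or_lt with h' | h'
  · exact (congrArg γ h').trans ht
  · exact absurd ⟨h, h'⟩ (hsub (hmem u)).2

variable [TopologicalSpace X]

lemma continuous_comp_lastBefore (hK : IsLoopErasure γ K) (hγ : Continuous γ) :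
    Continuous (γ ∘ lastBefore K) := by
  refine continuous_iff_continuousAt.2 fun t => continuousAt_iff_continuous_left_right.2 ⟨?_, ?_⟩
  · rw [show γ ∘ lastBefore K = γ ∘ firstAfter K from funext hK.apply_lastBefore]
    exact hγ.continuousAt.comp_continuousWithinAt
      (continuousWithinAt_firstAfter hK.isClosed hK.bot_mem t)
  · exact hγ.continuousAt.comp_continuousWithinAt
      (continuousWithinAt_lastBefore hK.isClosed hK.top_mem t)

lemma sInter [T2Space X] (hγ : Continuous γ) {c : Set (Set α)} (hc : ∀ K ∈ c, IsLoopErasure γ K)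
    (hchain : IsChain (· ⊆ ·) c) (hne : c.Nonempty) : IsLoopErasure γ (⋂₀ c) where
  isClosed := isClosed_sInter fun K hK => (hc K hK).isClosed
  bot_mem := fun K hK => (hc K hK).bot_mem
  top_mem := fun K hK => (hc K hK).top_mem
  eq_of_gap a ha b hb hab hgap := by
    have : Nonempty c := hne.to_subtype
    have : IsCodirectedOrder c :=
      (show IsChain (· ≥ ·) c from hchain.symm).directedOn.isCodirectedOrder
    rcases (Ioo a b).eq_empty_or_nonempty with hempty | ⟨t, ht⟩
    · obtain ⟨K, hK⟩ := hne
      exact (hc K hK).eq_of_gap a (ha K hK) b (hb K hK) hab (by simp [hempty])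
    have hlast := tendsto_lastBefore_sInter (fun K hK => (hc K hK).isClosed)
      (fun K hK => (hc K hK).bot_mem) hchain hne t
    have hfirst := tendsto_firstAfter_sInter (fun K hK => (hc K hK).isClosed)
      (fun K hK => (hc K hK).top_mem) hchain hne t
    rw [lastBefore_eq_of_gap ha hgap ht] at hlast
    rw [firstAfter_eq_of_gap hb hgap ht] at hfirst
    refine tendsto_nhds_unique ((hγ.tendsto a).comp hlast) (((hγ.tendsto b).comp hfirst).congr ?_)
    exact fun K => ((hc K K.2).apply_lastBefore t).symm

lemma exists_minimal [DenselyOrdered α] [T2Space X] (hγ : Continuous γ) :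
    ∃ K, Minimal (IsLoopErasure γ) K := by
  obtain ⟨K, -, hK⟩ := zorn_superset_nonempty {K | IsLoopErasure γ K}
    (fun c hc hchain hne => ⟨⋂₀ c, sInter hγ hc hchain hne, fun K => sInter_subset_of_mem⟩)
    Set.univ (univ γ)
  exact ⟨K, hK⟩

end IsLoopErasure

lemma exists_continuous_ordConnected_preimage [DenselyOrdered α] [OrderTopology α]
    [TopologicalSpace X] [T2Space X] {γ : α → X} (hγ : Continuous γ) :
    ∃ β : α → X, Continuous β ∧ β ⊥ = γ ⊥ ∧ β ⊤ = γ ⊤ ∧ range β ⊆ range γ ∧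
      ∀ x, (β ⁻¹' {x}).OrdConnected := by
  obtain ⟨K, hK⟩ := IsLoopErasure.exists_minimal hγ
  refine ⟨γ ∘ lastBefore K, hK.prop.continuous_comp_lastBefore hγ, ?_, ?_,
    range_comp_subset_range _ _, IsLoopErasure.ordConnected_preimage_comp_lastBefore hK⟩
  · rw [comp_apply, lastBefore_of_mem hK.prop.bot_mem]
  · rw [comp_apply, lastBefore_of_mem hK.prop.top_mem]

end LoopErasure

section Reparametrisation

lemma image_Iic_eq_of_apply_eq {α X : Type*} [LinearOrder α] {β : α → X}
    (hfib : ∀ x, (β ⁻¹' {x}).OrdConnected) {s t : α} (hst : s ≤ t) (h : β s = β t) :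
    β '' Iic s = β '' Iic t := by
  refine Subset.antisymm (by gcongr) ?_
  rintro _ ⟨u, hu, rfl⟩
  rcases le_total u s with hus | hsu
  · exact mem_image_of_mem β hus
  · exact ⟨s, self_mem_Iic, ((hfib (β s)).out rfl h.symm ⟨hsu, hu⟩).symm⟩

variable {α X : Type*} [CompleteLinearOrder α] [TopologicalSpace α] [OrderTopology α] {β : α → X}

lemma continuous_infDist_image_Iic [PseudoMetricSpace X] (hβ : Continuous β) (x : X) :
    Continuous fun t => Metric.infDist x (β '' Iic t) := by
  have hIic : ∀ t : α, Iic t = min t '' univ := fun t => by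
    rw [image_univ]
    exact Subset.antisymm (fun u hu => ⟨u, min_eq_right hu⟩) (range_subset_iff.2 (min_le_left t))
  have hsInf : ∀ t, Metric.infDist x (β '' Iic t) =
      sInf ((fun u => dist x (β (min t u))) '' univ) := fun t => by
    rw [Metric.infDist_eq_iInf, ← sInf_image', hIic, image_image, image_image]
  simp only [hsInf]
  exact isCompact_univ.continuous_sInf (by fun_prop)

variable [MetricSpace X]

lemma exists_infDist_image_Iic_lt [SeparableSpace α] (hβ : Continuous β)
    (hfib : ∀ x, (β ⁻¹' {x}).OrdConnected) {s t : α} (hst : s ≤ t) (h : β s ≠ β t) :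
    ∃ n, Metric.infDist (β (denseSeq α n)) (β '' Iic t) <
      Metric.infDist (β (denseSeq α n)) (β '' Iic s) := by
  have hnotMem : β t ∉ β '' Iic s := by
    rintro ⟨u, hus, hu⟩
    exact h ((hfib (β t)).out hu rfl ⟨hus, hst⟩)
  have hpos : 0 < Metric.infDist (β t) (β '' Iic s) :=
    ((isClosed_Iic.isCompact.image hβ).isClosed.notMem_iff_infDist_pos
      (nonempty_Iic.image β)).1 hnotMem
  obtain ⟨n, hn⟩ := (denseRange_denseSeq α).exists_mem_open
    (hβ.isOpen_preimage _ Metric.isOpen_ball) ⟨t, Metric.mem_ball_self (half_pos hpos)⟩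
  refine ⟨n, ?_⟩
  set z := β (denseSeq α n)
  have hzt : dist z (β t) < Metric.infDist (β t) (β '' Iic s) / 2 := hn
  calc Metric.infDist z (β '' Iic t) ≤ dist z (β t) :=
        Metric.infDist_le_dist_of_mem (mem_image_of_mem β self_mem_Iic)
    _ < Metric.infDist (β t) (β '' Iic s) - dist z (β t) := by linarith
    _ ≤ Metric.infDist z (β '' Iic s) := by
        rw [sub_le_iff_le_add, dist_comm]
        exact Metric.infDist_le_infDist_add_dist

lemma exists_continuous_monotone_eq_iff [SeparableSpace α] (hβ : Continuous β)
    (hfib : ∀ x, (β ⁻¹' {x}).OrdConnected) :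
    ∃ φ : α → ℝ, Continuous φ ∧ Monotone φ ∧ ∀ s t, φ s = φ t ↔ β s = β t := by
  have : Nonempty α := ⟨⊥⟩
  let d : ℕ → α → ℝ := fun n t => Metric.infDist (β (denseSeq α n)) (β '' Iic t)
  have hd_nonneg : ∀ n t, 0 ≤ (1 / 2) ^ n * d n t := fun n t =>
    mul_nonneg (by positivity) Metric.infDist_nonneg
  have hd_le : ∀ n t, (1 / 2) ^ n * d n t ≤ (1 / 2) ^ n * Metric.diam (range β) := fun n t => by
    gcongr
    exact (Metric.infDist_le_dist_of_mem (mem_image_of_mem β self_mem_Iic)).trans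
      (Metric.dist_le_diam_of_mem (isCompact_range hβ).isBounded (mem_range_self _)
        (mem_range_self t))
  have hd_anti : ∀ n {s t}, s ≤ t → (1 / 2) ^ n * d n t ≤ (1 / 2) ^ n * d n s := fun n s t hst => by
    gcongr
    exact Metric.infDist_le_infDist_of_subset (by gcongr) (nonempty_Iic.image β)
  have hbound := summable_geometric_two.mul_right (Metric.diam (range β))
  have hsum : ∀ t, Summable fun n => (1 / 2) ^ n * d n t := fun t =>
    hbound.of_nonneg_of_le (hd_nonneg · t) (hd_le · t)
  have hcont : Continuous fun t => ∑' n, (1 / 2) ^ n * d n t :=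
    continuous_tsum (fun n => (continuous_infDist_image_Iic hβ _).const_mul _) hbound
      fun n t => (Real.norm_of_nonneg (hd_nonneg n t)).trans_le (hd_le n t)
  refine ⟨fun t => -∑' n, (1 / 2) ^ n * d n t, hcont.neg, fun s t hst =>
    neg_le_neg ((hsum t).tsum_le_tsum (hd_anti · hst) (hsum s)), fun s t => ?_⟩
  wlog hst : s ≤ t generalizing s t
  · rw [eq_comm, this t s (le_of_not_ge hst), eq_comm]
  refine ⟨not_imp_not.1 fun hne => ?_, fun h => ?_⟩
  · obtain ⟨n, hn⟩ := exists_infDist_image_Iic_lt hβ hfib hst hne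
    refine (neg_lt_neg ((hsum t).tsum_lt_tsum (hd_anti · hst) (i := n) ?_ (hsum s))).ne
    gcongr
  · simp only [d, image_Iic_eq_of_apply_eq hfib hst h]

end Reparametrisation

lemma exists_continuous_injective_comp_eq {T Z X : Type*} [TopologicalSpace T] [CompactSpace T]
    [TopologicalSpace Z] [T2Space Z] [TopologicalSpace X] {ψ : T → Z} {β : T → X}
    (hψ : Continuous ψ) (hsurj : Surjective ψ) (hβ : Continuous β)
    (h : ∀ s t, ψ s = ψ t ↔ β s = β t) :
    ∃ γ : Z → X, Continuous γ ∧ Injective γ ∧ γ ∘ ψ = β := by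
  have hcomp : (β ∘ surjInv hsurj) ∘ ψ = β :=
    funext fun t => (h _ _).1 (surjInv_eq hsurj (ψ t))
  refine ⟨β ∘ surjInv hsurj, ?_, fun z w hzw => ?_, hcomp⟩
  · rwa [(hψ.isClosedMap.isQuotientMap hψ hsurj).continuous_iff, hcomp]
  · simpa only [surjInv_eq] using (h _ _).2 hzw

lemma JoinedByArcIn.of_joinedIn {X : Type*} [MetricSpace X] {S : Set X} {x y : X}
    (h : JoinedIn S x y) (hxy : x ≠ y) : JoinedByArcIn S x y := by
  obtain ⟨γ, hγS⟩ := h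
  obtain ⟨β, hβ, hβ0, hβ1, hβγ, hfib⟩ := exists_continuous_ordConnected_preimage γ.continuous
  obtain ⟨φ, hφ, hmono, hφβ⟩ := exists_continuous_monotone_eq_iff hβ hfib
  replace hβ0 : β 0 = x := hβ0.trans γ.source
  replace hβ1 : β 1 = y := hβ1.trans γ.target
  have hlt : φ 0 < φ 1 := (hmono zero_le_one).lt_of_ne fun h => hxy <| by
    rw [← hβ0, ← hβ1, (hφβ 0 1).1 h]
  let ψ : I → Icc (φ 0) (φ 1) := fun t => ⟨φ t, hmono t.2.1, hmono t.2.2⟩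
  have hψ : Surjective ψ := fun z => by
    obtain ⟨t, -, ht⟩ := intermediate_value_Icc zero_le_one hφ.continuousOn z.2
    exact ⟨t, Subtype.ext ht⟩
  obtain ⟨δ, hδ, hinj, hδβ⟩ := exists_continuous_injective_comp_eq (ψ := ψ) (by fun_prop) hψ hβ
    (fun s t => Subtype.ext_iff.trans (hφβ s t))
  let e := iccHomeoI (φ 0) (φ 1) hlt
  have he0 : e.symm 0 = ψ 0 := Subtype.ext (by simp [e, ψ])
  have he1 : e.symm 1 = ψ 1 := Subtype.ext (by simp [e, ψ])
  have hrange : range δ = range β := by rw [← hδβ, hψ.range_comp]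
  refine ⟨δ ∘ e.symm, hδ.comp e.symm.continuous, hinj.comp e.symm.injective, ?_, ?_, ?_⟩
  · rw [comp_apply, he0, ← hβ0, ← hδβ, comp_apply]
  · rw [comp_apply, he1, ← hβ1, ← hδβ, comp_apply]
  · rw [e.symm.surjective.range_comp, hrange]
    exact hβγ.trans (range_subset_iff.2 hγS)

theorem arcwise_connected_general {X : Type*} [TopologicalSpace X] [IsCompletelyMetrizableSpace X]
    [PreconnectedSpace X] [LocallyConnectedSpace X] (x y : X) (hxy : x ≠ y) :
    JoinedByArcIn (Set.univ : Set X) x y := by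
  let := upgradeIsCompletelyMetrizable X
  exact .of_joinedIn (joinedIn_univ.2 (joined_of_completeSpace x y)) hxy

/-- Every compact, connected, locally connected metric space is arcwise connected. -/
theorem arcwise_connected {X : Type*} [MetricSpace X] [CompactSpace X]
    [ConnectedSpace X] [LocallyConnectedSpace X] (x y : X) (hxy : x ≠ y) :
    JoinedByArcIn (Set.univ : Set X) x y :=
  arcwise_connected_general x y hxy
end

section
/- Let f : ℂ → ℂ be the evaluation map of a polynomial of degree d ≥ 2. Then the filled Julia set K_f is full, i.e., its complement ℂ ∖ K_f is a connected subset of ℂ. -/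
open Function Set Topology

/-- The filled Julia set of `f`: points with bounded forward orbit. -/
def filledJulia (f : ℂ → ℂ) : Set ℂ :=
  {z : ℂ | Bornology.IsBounded (Set.range fun n => f^[n] z)}

/-!
Outside a large ball `f` at least doubles norms, so an orbit that leaves the ball tends to
infinity, and the filled Julia set is the set where all iterates are bounded by one and the same
radius. A bounded component of the complement would have its frontier in the filled Julia set, so
by the maximum modulus principle the iterates would obey this bound on the component as well, which
is absurd. All components of the complement are therefore unbounded; each of them meets the
connected exterior of the ball, so there is only one.
-/

open Bornology Filter Metric

section Topology

theorem frontier_connectedComponentIn_subset_compl {X : Type*} [TopologicalSpace X]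
    [LocallyConnectedSpace X] {U : Set X} (hU : IsOpen U) (x : X) :
    frontier (connectedComponentIn U x) ⊆ Uᶜ := by
  intro y hy hyU
  have hyV : y ∈ connectedComponentIn U y := mem_connectedComponentIn hyU
  rw [hU.connectedComponentIn.frontier_eq] at hy
  obtain ⟨v, hvy, hvx⟩ := mem_closure_iff.mp hy.1 _ hU.connectedComponentIn hyV
  have hcomp : connectedComponentIn U x = connectedComponentIn U y :=
    (connectedComponentIn_eq hvx).trans (connectedComponentIn_eq hvy).symm
  exact hy.2 (hcomp ▸ hyV)

variable {E : Type*} [NormedAddCommGroup E] [NormedSpace ℝ E]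

theorem isConnected_compl_closedBall_of_one_lt_rank (h : 1 < Module.rank ℝ E) (x : E) (r : ℝ) :
    IsConnected (closedBall x r)ᶜ := by
  have : Nontrivial E := rank_pos_iff_nontrivial.mp (zero_lt_one.trans h)
  rcases lt_or_ge r 0 with hr | hr
  · rw [closedBall_eq_empty.mpr hr, compl_empty]
    exact isConnected_univ
  have himage : (fun p : ℝ × E ↦ x + p.1 • p.2) '' (Ioi r ×ˢ sphere 0 1) = (closedBall x r)ᶜ := by
    ext z
    simp only [mem_image, mem_prod, mem_Ioi, mem_sphere_zero_iff_norm, Prod.exists, mem_compl_iff,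
      mem_closedBall, dist_eq_norm, not_le]
    constructor
    · rintro ⟨t, y, ⟨ht, hy⟩, rfl⟩
      rwa [add_sub_cancel_left, norm_smul, hy, mul_one, Real.norm_of_nonneg (hr.trans ht.le)]
    · intro hz
      have hzx : z - x ≠ 0 := norm_pos_iff.mp (hr.trans_lt hz)
      refine ⟨‖z - x‖, ‖z - x‖⁻¹ • (z - x), ⟨hz, norm_smul_inv_norm (𝕜 := ℝ) hzx⟩, ?_⟩
      rw [smul_inv_smul₀ (norm_ne_zero_iff.mpr hzx), add_sub_cancel]
  rw [← himage]
  exact (isConnected_Ioi.prod (isConnected_sphere h 0 zero_le_one)).image _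
    (by fun_prop : Continuous fun p : ℝ × E ↦ x + p.1 • p.2).continuousOn

theorem isConnected_compl_of_forall_not_isBounded_connectedComponentIn
    (h : 1 < Module.rank ℝ E) {K : Set E} (hK : IsBounded K)
    (hcomp : ∀ x ∈ Kᶜ, ¬IsBounded (connectedComponentIn Kᶜ x)) : IsConnected Kᶜ := by
  obtain ⟨r, hKr⟩ := hK.subset_closedBall 0
  have hext : (closedBall 0 r)ᶜ ⊆ Kᶜ := compl_subset_compl.mpr hKr
  obtain ⟨⟨a, ha⟩, hconn⟩ := isConnected_compl_closedBall_of_one_lt_rank h 0 r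
  refine ⟨⟨a, hext ha⟩, isPreconnected_of_forall a fun x hx ↦ ?_⟩
  obtain ⟨w, hwx, hwr⟩ : ∃ w ∈ connectedComponentIn Kᶜ x, w ∈ (closedBall 0 r)ᶜ :=
    not_subset.mp fun hsub ↦ hcomp x hx (isBounded_closedBall.subset hsub)
  exact ⟨connectedComponentIn Kᶜ x ∪ (closedBall 0 r)ᶜ,
    union_subset (connectedComponentIn_subset _ _) hext, Or.inr ha,
    Or.inl (mem_connectedComponentIn hx),
    isPreconnected_connectedComponentIn.union w hwx hwr hconn⟩

end Topology

theorem one_lt_rank_real_of_complex (E : Type*) [AddCommGroup E] [Module ℂ E] [Nontrivial E] :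
    1 < Module.rank ℝ E := by
  rw [rank_real_of_complex]
  calc (1 : Cardinal) < 2 * 1 := by norm_num
    _ ≤ 2 * Module.rank ℂ E := by gcongr; exact Cardinal.one_le_iff_pos.mpr rank_pos

section MaximumModulus

variable {E : Type*} [NormedAddCommGroup E] [NormedSpace ℂ E] [Nontrivial E]

theorem not_isBounded_connectedComponentIn_compl_setOf_forall_norm_le {F ι : Type*}
    [NormedAddCommGroup F] [NormedSpace ℂ F] {g : ι → E → F} (hg : ∀ i, Differentiable ℂ (g i))
    {R : ι → ℝ} {x : E} (hx : x ∈ {z | ∀ i, ‖g i z‖ ≤ R i}ᶜ) :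
    ¬IsBounded (connectedComponentIn {z | ∀ i, ‖g i z‖ ≤ R i}ᶜ x) := by
  intro hb
  have hclosed : IsClosed {z | ∀ i, ‖g i z‖ ≤ R i} := by
    simp only [ofPred_forall]
    exact isClosed_iInter fun i ↦ isClosed_le (hg i).continuous.norm continuous_const
  have hfrontier : ∀ z ∈ frontier (connectedComponentIn {z | ∀ i, ‖g i z‖ ≤ R i}ᶜ x),
      ∀ i, ‖g i z‖ ≤ R i := fun z hz ↦
    notMem_compl_iff.mp (frontier_connectedComponentIn_subset_compl hclosed.isOpen_compl x hz)
  exact hx fun i ↦ Complex.norm_le_of_forall_mem_frontier_norm_le hb (hg i).diffContOnCl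
    (fun z hz ↦ hfrontier z hz i) (subset_closure (mem_connectedComponentIn hx))

end MaximumModulus

section Escape

variable {E : Type*} [SeminormedAddGroup E] {f : E → E} {c R : ℝ}

theorem pow_mul_norm_le_norm_iterate (hc : 1 ≤ c) (hf : ∀ z, R < ‖z‖ → c * ‖z‖ ≤ ‖f z‖) {z : E}
    (hz : R < ‖z‖) (n : ℕ) : c ^ n * ‖z‖ ≤ ‖f^[n] z‖ := by
  induction n with
  | zero => simp
  | succ n ih =>
    have hn : R < ‖f^[n] z‖ :=
      hz.trans_le ((le_mul_of_one_le_left (norm_nonneg z) (one_le_pow₀ hc)).trans ih)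
    calc c ^ (n + 1) * ‖z‖ = c * (c ^ n * ‖z‖) := by ring
      _ ≤ c * ‖f^[n] z‖ := by gcongr
      _ ≤ ‖f (f^[n] z)‖ := hf _ hn
      _ = ‖f^[n + 1] z‖ := by rw [iterate_succ_apply']

theorem tendsto_norm_iterate_atTop (hR : 0 ≤ R) (hc : 1 < c)
    (hf : ∀ z, R < ‖z‖ → c * ‖z‖ ≤ ‖f z‖) {z : E} (hz : R < ‖z‖) :
    Tendsto (fun n ↦ ‖f^[n] z‖) atTop atTop :=
  tendsto_atTop_mono (pow_mul_norm_le_norm_iterate hc.le hf hz)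
    ((tendsto_pow_atTop_atTop_of_one_lt hc).atTop_mul_const (hR.trans_lt hz))

theorem isBounded_range_iterate_iff_forall_norm_le (hR : 0 ≤ R) (hc : 1 < c)
    (hf : ∀ z, R < ‖z‖ → c * ‖z‖ ≤ ‖f z‖) {z : E} :
    IsBounded (range fun n ↦ f^[n] z) ↔ ∀ n, ‖f^[n] z‖ ≤ R := by
  constructor
  · intro hb n
    by_contra! hn
    obtain ⟨C, hC⟩ := isBounded_iff_forall_norm_le.mp hb
    obtain ⟨m, hm⟩ := ((tendsto_norm_iterate_atTop hR hc hf hn).eventually_gt_atTop C).exists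
    rw [← iterate_add_apply] at hm
    exact hm.not_ge (hC _ (mem_range_self (m + n)))
  · exact fun h ↦ isBounded_iff_forall_norm_le.mpr ⟨R, forall_mem_range.mpr h⟩

end Escape

theorem eventually_cobounded_mul_norm_le_norm_eval {A : Type*} [NormedRing A]
    [NormMulClass A] {p : Polynomial A} (hp : 2 ≤ p.natDegree) (c : ℝ) :
    ∀ᶠ z in cobounded A, c * ‖z‖ ≤ ‖p.eval z‖ := by
  have hdeg : (Polynomial.X : Polynomial A).degree < p.degree :=
    Polynomial.degree_lt_degree (Polynomial.natDegree_X_le.trans_lt hp)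
  obtain ⟨n, hn⟩ := exists_nat_ge c
  filter_upwards [Asymptotics.isLittleO_iff_nat_mul_le.mp
    (Polynomial.isLittleO_cobounded_of_degree_lt hdeg) n] with z hz
  rw [Polynomial.eval_X] at hz
  exact (mul_le_mul_of_nonneg_right hn (norm_nonneg z)).trans hz

/-- In several variables this covers the polynomial endomorphisms of `ℂᵏ` whose top-degree
homogeneous part, of degree at least two, vanishes only at the origin. -/
theorem filledJulia_compl_connected_general {E : Type*} [NormedAddCommGroup E] [NormedSpace ℂ E]
    [Nontrivial E] {f : E → E} (hf : Differentiable ℂ f) {c : ℝ} (hc : 1 < c)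
    (hexp : ∀ᶠ z in cobounded E, c * ‖z‖ ≤ ‖f z‖) :
    IsConnected {z : E | IsBounded (range fun n ↦ f^[n] z)}ᶜ := by
  obtain ⟨R, hR, hesc⟩ : ∃ R, 0 ≤ R ∧ ∀ z, R < ‖z‖ → c * ‖z‖ ≤ ‖f z‖ := by
    obtain ⟨r, -, hr⟩ := hasBasis_cobounded_norm.eventually_iff.mp hexp
    exact ⟨max r 0, le_max_right _ _, fun z hz ↦ hr ((le_max_left _ _).trans hz.le)⟩
  simp only [isBounded_range_iterate_iff_forall_norm_le hR hc hesc]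
  have hbdd : IsBounded {z | ∀ n, ‖f^[n] z‖ ≤ R} :=
    isBounded_iff_forall_norm_le.mpr ⟨R, fun z hz ↦ hz 0⟩
  exact isConnected_compl_of_forall_not_isBounded_connectedComponentIn
    (one_lt_rank_real_of_complex E) hbdd fun _ hz ↦
      not_isBounded_connectedComponentIn_compl_setOf_forall_norm_le hf.iterate hz

/-- The filled Julia set is full: its complement is connected. -/
theorem filledJulia_compl_connected (p : Polynomial ℂ) (d : ℕ) (hd : 2 ≤ d)
    (hdeg : p.natDegree = d) (f : ℂ → ℂ) (hf : ∀ z, f z = p.eval z) :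
    IsConnected ((filledJulia f)ᶜ) := by
  obtain rfl : f = fun z ↦ p.eval z := funext hf
  exact filledJulia_compl_connected_general p.differentiable one_lt_two
    (eventually_cobounded_mul_norm_le_norm_eval (hdeg ▸ hd) 2)
end
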